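/- Let 𝔽 be a finite field with q elements, let (k_i)_{i∈Ω} be a family of positive integers, and let H = ∏_{i∈Ω} 𝔽^{k_i}. Then H satisfies the MacWilliams extension property for P-weight if and only if (H, P) satisfies Condition (E) and, for every r ∈ [1, m], either k_i = 1 for all i ∈ W_r or |W_r| ≤ q. -/

import Mathlib

def idl {Ω : Type*} [PartialOrder Ω] (B : Set Ω) : Set Ω := {a | ∃ b ∈ B, a ≤ b}

noncomputable def lenP {Ω : Type*} [PartialOrder Ω] (y : Ω) : ℕ :=
  sSup {n : ℕ | ∃ c : Finset Ω, IsChain (· ≤ ·) (c : Set Ω) ∧ y ∈ c ∧ (∀ x ∈ c, x ≤ y) ∧ c.card = n}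

noncomputable def maxChainCard (Ω : Type*) [PartialOrder Ω] : ℕ :=
  sSup {n : ℕ | ∃ c : Finset Ω, IsChain (· ≤ ·) (c : Set Ω) ∧ c.card = n}

def Hierarchical (Ω : Type*) [PartialOrder Ω] : Prop :=
  ∀ u v : Ω, lenP u + 1 ≤ lenP v → u ≤ v

def Wset {Ω : Type*} [PartialOrder Ω] (r : ℕ) : Set Ω := {u | lenP u = r}

def hsupp {Ω : Type*} {H : Ω → Type*} [∀ i, Zero (H i)] (β : ∀ i, H i) : Set Ω :=
  {i | β i ≠ 0}

/-- The `P`-weight of `β`. -/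
noncomputable def wtP {Ω : Type*} [PartialOrder Ω] {H : Ω → Type*} [∀ i, Zero (H i)]
    (β : ∀ i, H i) : ℕ :=
  Set.ncard (idl (hsupp β))

/-- The MacWilliams extension property for `P`-weight. -/
def MEPP (S : Type*) [Ring S] {Ω : Type*} [PartialOrder Ω] (H : Ω → Type*)
    [∀ i, AddCommGroup (H i)] [∀ i, Module S (H i)] : Prop :=
  ∀ C : Submodule S (∀ i, H i), ∀ f : C →ₗ[S] (∀ i, H i),
    (∀ x : C, wtP (f x) = wtP (x : ∀ i, H i)) →
    ∃ φ : (∀ i, H i) ≃ₗ[S] (∀ i, H i),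
      (∀ α : ∀ i, H i, wtP (φ α) = wtP α) ∧ ∀ x : C, φ (x : ∀ i, H i) = f x

/-- Condition (E). -/
def CondE (S : Type*) [Ring S] {Ω : Type*} [PartialOrder Ω] (H : Ω → Type*)
    [∀ i, AddCommGroup (H i)] [∀ i, Module S (H i)] : Prop :=
  Hierarchical Ω ∧ ∀ u v : Ω, lenP u = lenP v → Nonempty (H u ≃ₗ[S] H v)

/-!
Filter `H` by the subspaces `H_{≤ r}` of vectors supported on the elements of length at most `r`. If
`P` is hierarchical, the weight of a vector of `H_{≤ r}` determines the number of its nonzero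
coordinates in `W_r`, and is determined by it unless this number is zero.

Sufficiency. Let `f` preserve the weight on `C`. For every subspace `U` of `C ∩ H_{≤ r}`, as many
coordinates in `W_r` vanish identically on `U` as on its image under `f`: compare a generic vector
of `U` if `|W_r| ≤ q`, and count all nonzero entries over `U` if the coordinates are
one-dimensional. By inversion over the lattice of subspaces, the kernels of the coordinates on
`C ∩ H_{≤ r}` before and after `f` agree up to a permutation of `W_r`. Hence, on `C ∩ H_{≤ r}` and
modulo `H_{< r}`, the map `f` agrees with a monomial automorphism of `H`. The difference is strictly
triangular for the filtration and extends from `C` to `H` along a complement compatible with it.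

Necessity. If the hierarchical condition first fails at level `r`, then for a minimal `v` above
level `r` that is not above all of `W_r` some vector supported on `W_r` has the weight of `v`, and a
weight-preserving automorphism, which preserves `H_{≤ r}`, cannot send one to the other. The inverse
of an embedding `H_u → H_v` between coordinates of one level preserves the weight, and it extends
only if the embedding is onto. Finally, if `|W_r| > q` and the coordinates in `W_r` have dimension
at least two, place the `q + 1` points of the projective line in `W_r`. A pencil of `q + 1` linear
forms on `𝔽²` is nonzero in exactly `q` places at every nonzero vector, as are `q` injections of
`𝔽²`. The map from the latter to the former preserves the weight and does not extend, since each
form of the pencil has a nonzero zero.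
-/

section LinearAlgebra

variable {K V : Type*} [DivisionRing K] [AddCommGroup V] [Module K V]

theorem exists_forall_notMem_of_card_le {ι : Type*} {p : ι → Submodule K V} {s : Finset ι}
    (hp : ∀ i ∈ s, p i ≠ ⊤) (hs : (s.card : ℕ∞) ≤ ENat.card K) : ∃ x, ∀ i ∈ s, x ∉ p i := by
  classical
  induction s using Finset.induction_on with
  | empty => exact ⟨0, by simp⟩
  | insert i s hi ih =>
    have hcard : (s.card : ℕ∞) < ENat.card K := by
      rw [Finset.card_insert_of_notMem hi] at hs
      exact lt_of_lt_of_le (by exact_mod_cast s.card.lt_succ_self) hs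
    obtain ⟨x, hx⟩ := ih (fun j hj => hp j (Finset.mem_insert_of_mem hj)) hcard.le
    by_cases hxi : x ∉ p i
    · exact ⟨x, by simpa [hxi] using hx⟩
    rw [not_not] at hxi
    obtain ⟨y, hy⟩ : ∃ y, y ∉ p i := by
      simpa [Submodule.eq_top_iff'] using hp i (Finset.mem_insert_self i s)
    -- The line `y + K x` misses `p i` and meets every other `p j` at most once.
    by_contra! hcon
    have hmeet (t : K) : ∃ j ∈ s, y + t • x ∈ p j := by
      obtain ⟨j, hj, hmem⟩ := hcon (y + t • x)
      refine ⟨j, (Finset.mem_insert.1 hj).resolve_left ?_, hmem⟩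
      rintro rfl
      exact hy (by simpa using (p j).sub_mem hmem ((p j).smul_mem t hxi))
    choose j hjs hj using hmeet
    have hinj : Function.Injective fun t => (⟨j t, hjs t⟩ : s) := by
      intro t u htu
      have htu : j t = j u := congrArg Subtype.val htu
      by_contra hne
      have hmem : (t - u) • x ∈ p (j u) := by
        have := (p (j u)).sub_mem (htu ▸ hj t : y + t • x ∈ p (j u)) (hj u)
        rwa [add_sub_add_left_eq_sub, ← sub_smul] at this
      exact hx _ (hjs u) (((p (j u)).smul_mem_iff (sub_ne_zero.2 hne)).1 hmem)
    exact hcard.not_ge (by simpa using ENat.card_le_card_of_injective hinj)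

theorem exists_linearEquiv_apply_eq_of_ker_eq {A B : Type*} [AddCommGroup A] [Module K A]
    [FiniteDimensional K A] [AddCommGroup B] [Module K B] (e : A ≃ₗ[K] B) {l : V →ₗ[K] A}
    {m : V →ₗ[K] B} (h : l.ker = m.ker) : ∃ g : A ≃ₗ[K] B, ∀ x, g (l x) = m x := by
  let m' : V →ₗ[K] A := e.symm.toLinearMap ∘ₗ m
  have hker : l.ker = m'.ker := by rw [h, LinearEquiv.ker_comp]
  let f : l.range ≃ₗ[K] m'.range :=
    l.quotKerEquivRange.symm ≪≫ₗ Submodule.quotEquivOfEq _ _ hker ≪≫ₗ m'.quotKerEquivRange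
  have hf (x : V) : (f ⟨l x, x, rfl⟩ : A) = m' x := by
    have hx : l.quotKerEquivRange.symm ⟨l x, x, rfl⟩ = Submodule.Quotient.mk x :=
      (LinearEquiv.symm_apply_eq _).2 rfl
    simp only [f, LinearEquiv.trans_apply, hx]
    rfl
  obtain ⟨g, hg⟩ := Submodule.exists_linearEquiv_restrict_eq f
  refine ⟨g ≪≫ₗ e, fun x => ?_⟩
  rw [LinearEquiv.trans_apply, ← hg ⟨l x, x, rfl⟩, hf]
  exact e.apply_symm_apply (m x)

theorem exists_isCompl_forall_lt_le_sup {α : Type*} [Lattice α] [BoundedOrder α]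
    [IsModularLattice α] [ComplementedLattice α] {F : ℕ → α} (hF : Monotone F) (c : α) (n : ℕ) :
    ∃ q, IsCompl c q ∧ ∀ s < n, F s ≤ c ⊓ F s ⊔ q ⊓ F s := by
  induction n with
  | zero => simpa using exists_isCompl c
  | succ n ih =>
    obtain ⟨q, hcq, hq⟩ := ih
    obtain ⟨d, hqd, hd⟩ := Disjoint.exists_isCompl
      (hcq.symm.disjoint.mono (inf_le_left : q ⊓ F n ≤ q) (inf_le_left : c ⊓ F n ≤ c))
    obtain ⟨q', hdq', hq'⟩ := Disjoint.exists_isCompl (a := d ⊓ F n) (b := c) <| by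
      rw [disjoint_iff, inf_assoc, inf_comm (F n) c]
      exact hd.inf_eq_bot
    refine ⟨q', hq'.symm, fun s hs => ?_⟩
    rcases Nat.lt_succ_iff_lt_or_eq.1 hs with hs | rfl
    · have hqs : q ⊓ F s ≤ q' :=
        (le_inf ((inf_le_inf_left q (hF hs.le)).trans hqd)
          (inf_le_right.trans (hF hs.le))).trans hdq'
      exact (hq s hs).trans (sup_le_sup_left (le_inf hqs inf_le_right) _)
    · calc F s = (c ⊓ F s ⊔ d) ⊓ F s := by rw [sup_comm, hd.sup_eq_top, top_inf_eq]
        _ = c ⊓ F s ⊔ d ⊓ F s := (sup_inf_assoc_of_le d inf_le_right).symm ▸ rfl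
        _ ≤ c ⊓ F s ⊔ q' ⊓ F s := sup_le_sup_left (le_inf hdq' inf_le_right) _

theorem exists_extend_of_filtration {W : Type*} [AddCommGroup W] [Module K W]
    {F : ℕ → Submodule K V} (hF : Monotone F) (E : ℕ → Submodule K W) {C : Submodule K V}
    (f : C →ₗ[K] W) (n : ℕ) (hf : ∀ s < n, ∀ x : C, (x : V) ∈ F s → f x ∈ E s) :
    ∃ g : V →ₗ[K] W, (∀ x : C, g x = f x) ∧ ∀ s < n, ∀ x ∈ F s, g x ∈ E s := by
  obtain ⟨Q, hQ, hFQ⟩ := exists_isCompl_forall_lt_le_sup hF C n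
  refine ⟨f ∘ₗ C.projectionOnto Q hQ, fun x => ?_, fun s hs x hx => ?_⟩
  · rw [LinearMap.comp_apply, Submodule.projectionOnto_apply_left]
  · obtain ⟨y, ⟨hyC, hyF⟩, z, ⟨hzQ, -⟩, rfl⟩ := Submodule.mem_sup.1 (hFQ s hs hx)
    rw [LinearMap.comp_apply, map_add, Submodule.projectionOnto_apply_left hQ ⟨y, hyC⟩,
      Submodule.projectionOnto_apply_right hQ ⟨z, hzQ⟩, add_zero]
    exact hf s hs _ hyF

end LinearAlgebra

section Counting

variable {K V ι : Type*} [DivisionRing K] [AddCommGroup V] [Module K V] [Finite ι]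
  {A : ι → Type*} [∀ i, AddCommGroup (A i)] [∀ i, Module K (A i)] {l m : ∀ i, V →ₗ[K] A i}

theorem ncard_ne_zero_le_of_card_le (hι : (Nat.card ι : ℕ∞) ≤ ENat.card K)
    (h : ∀ x, {i | l i x ≠ 0}.ncard = {i | m i x ≠ 0}.ncard) :
    {i | l i ≠ 0}.ncard ≤ {i | m i ≠ 0}.ncard := by
  obtain ⟨x, hx⟩ : ∃ x, ∀ i ∈ (Set.toFinite {i | l i ≠ 0}).toFinset, x ∉ (l i).ker := by
    refine exists_forall_notMem_of_card_le (fun i hi => ?_) (le_trans ?_ hι)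
    · simpa using hi
    · exact_mod_cast (Set.ncard_eq_toFinset_card _).symm.trans_le (Set.ncard_le_card _)
  calc {i | l i ≠ 0}.ncard ≤ {i | l i x ≠ 0}.ncard := by
        exact Set.ncard_le_ncard fun i hi => hx i (by simpa using hi)
    _ = {i | m i x ≠ 0}.ncard := h x
    _ ≤ {i | m i ≠ 0}.ncard := by
        exact Set.ncard_le_ncard fun i hi hm => hi (by simp [hm])

theorem card_mul_card_ker {W : Type*} [AddCommGroup W] [Module K W] (hW : Module.finrank K W = 1)
    {f : V →ₗ[K] W} (hf : f ≠ 0) : Nat.card K * Nat.card f.ker = Nat.card V := by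
  have : Module.Finite K W := Module.finite_of_finrank_eq_succ hW
  have e : W ≃ₗ[K] K := LinearEquiv.ofFinrankEq W K (by simp [hW])
  rw [Submodule.card_eq_card_quotient_mul_card f.ker, mul_comm,
    Nat.card_congr (f.quotKerEquivOfSurjective
      (surjective_of_nonzero_of_finrank_eq_one hW hf) ≪≫ₗ e).toEquiv]

theorem card_mul_sum_ncard_apply_ne_zero [Finite K] [Fintype V]
    (hA : ∀ i, Module.finrank K (A i) = 1) (l : ∀ i, V →ₗ[K] A i) :
    Nat.card K * ∑ x, {i | l i x ≠ 0}.ncard =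
      {i | l i ≠ 0}.ncard * ((Nat.card K - 1) * Nat.card V) := by
  classical
  have := Fintype.ofFinite ι
  have hcard (i : ι) (hi : l i ≠ 0) :
      Nat.card K * {x | l i x ≠ 0}.ncard = (Nat.card K - 1) * Nat.card V := by
    have hcompl : {x | l i x ≠ 0}.ncard = Nat.card V - Nat.card (l i).ker :=
      Set.ncard_compl ((l i).ker : Set V)
    rw [hcompl, Nat.mul_sub, card_mul_card_ker (hA i) hi, Nat.sub_mul, one_mul]
  calc Nat.card K * ∑ x, {i | l i x ≠ 0}.ncard
      = Nat.card K * ∑ i, {x | l i x ≠ 0}.ncard := by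
        simp only [Set.ncard_eq_toFinset_card', Set.toFinset_ofPred]
        congr 1
        exact Finset.sum_card_bipartiteAbove_eq_sum_card_bipartiteBelow fun x i => l i x ≠ 0
    _ = ∑ i with l i ≠ 0, Nat.card K * {x | l i x ≠ 0}.ncard := by
        rw [Finset.mul_sum, Finset.sum_filter_of_ne]
        rintro i - hi hl
        simp [hl] at hi
    _ = {i | l i ≠ 0}.ncard * ((Nat.card K - 1) * Nat.card V) := by
        rw [Finset.sum_congr rfl fun i hi => hcard i (Finset.mem_filter.1 hi).2,
          Finset.sum_const, smul_eq_mul, Set.ncard_eq_toFinset_card', Set.toFinset_ofPred]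

theorem ncard_ne_zero_eq [Module.Finite K V]
    (hA : (∀ i, Module.finrank K (A i) = 1) ∨ (Nat.card ι : ℕ∞) ≤ ENat.card K)
    (h : ∀ x, {i | l i x ≠ 0}.ncard = {i | m i x ≠ 0}.ncard) :
    {i | l i ≠ 0}.ncard = {i | m i ≠ 0}.ncard := by
  by_cases hι : (Nat.card ι : ℕ∞) ≤ ENat.card K
  · exact (ncard_ne_zero_le_of_card_le hι h).antisymm
      (ncard_ne_zero_le_of_card_le hι fun x => (h x).symm)
  have : Finite K := by
    by_contra hK
    simp [ENat.card_eq_top.2 (not_finite_iff_infinite.1 hK)] at hι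
  have : Finite V := Module.finite_of_finite K
  have := Fintype.ofFinite V
  have hA := hA.resolve_right hι
  have hpos : 0 < (Nat.card K - 1) * Nat.card V :=
    Nat.mul_pos (Nat.sub_pos_of_lt Finite.one_lt_card) Nat.card_pos
  refine Nat.eq_of_mul_eq_mul_right hpos ?_
  rw [← card_mul_sum_ncard_apply_ne_zero hA l, ← card_mul_sum_ncard_apply_ne_zero hA m,
    Finset.sum_congr rfl fun x _ => h x]

theorem ncard_le_eq_add_sum {X : Type*} [PartialOrder X] [DecidableLT X]
    {a : ι → X} {s : Finset X} (hs : ∀ i, a i ∈ s) (u : X) :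
    {i | u ≤ a i}.ncard = {i | a i = u}.ncard + ∑ w ∈ s with u < w, {i | a i = w}.ncard := by
  classical
  have := Fintype.ofFinite ι
  rw [← Finset.sum_insert (f := fun w => {i | a i = w}.ncard) (by simp),
    Set.ncard_eq_toFinset_card', Finset.card_eq_sum_card_fiberwise (f := a)
      (t := insert u {w ∈ s | u < w}) (fun i hi => ?_)]
  · refine Finset.sum_congr rfl fun w hw => ?_
    have huw : u ≤ w := by
      rcases Finset.mem_insert.1 hw with rfl | hw
      · exact le_rfl
      · exact (Finset.mem_filter.1 hw).2.le
    rw [Set.ncard_eq_toFinset_card']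
    congr 1
    ext i
    simp +contextual [huw]
  · have hi : u ≤ a i := by simpa using hi
    simpa [hs i, eq_comm] using hi.eq_or_lt

theorem exists_perm_eq_of_ncard_le_eq {X : Type*} [PartialOrder X] [WellFoundedGT X] {a b : ι → X}
    (h : ∀ u, {i | u ≤ a i}.ncard = {i | u ≤ b i}.ncard) :
    ∃ σ : Equiv.Perm ι, ∀ i, a i = b (σ i) := by
  classical
  have := Fintype.ofFinite ι
  have hfib (u : X) : {i | a i = u}.ncard = {i | b i = u}.ncard := by
    induction u using WellFoundedGT.induction with
    | ind u ih =>
      have hu := h u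
      rw [ncard_le_eq_add_sum (s := .image a .univ ∪ .image b .univ) (by simp),
        ncard_le_eq_add_sum (s := .image a .univ ∪ .image b .univ) (by simp),
        Finset.sum_congr rfl fun w hw => ih w (Finset.mem_filter.1 hw).2] at hu
      exact Nat.add_right_cancel hu
  let e (u : X) : {i // a i = u} ≃ {i // b i = u} := (Finite.card_eq.1 (hfib u)).some
  exact ⟨Equiv.ofFiberEquiv e, fun i => (Equiv.ofFiberEquiv_map e i).symm⟩

theorem exists_perm_ker_eq [Module.Finite K V]
    (hA : (∀ i, Module.finrank K (A i) = 1) ∨ (Nat.card ι : ℕ∞) ≤ ENat.card K)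
    (h : ∀ x, {i | l i x ≠ 0}.ncard = {i | m i x ≠ 0}.ncard) :
    ∃ σ : Equiv.Perm ι, ∀ i, (l i).ker = (m (σ i)).ker := by
  refine exists_perm_eq_of_ncard_le_eq (b := fun i => (m i).ker) fun U => ?_
  have hU := ncard_ne_zero_eq (l := fun i => l i ∘ₗ U.subtype) (m := fun i => m i ∘ₗ U.subtype) hA
    fun x => h x
  have hcompl (l : ∀ i, V →ₗ[K] A i) :
      {i | U ≤ (l i).ker} = {i | l i ∘ₗ U.subtype ≠ 0}ᶜ := by
    ext i
    simp [LinearMap.le_ker_iff_comp_subtype_eq_zero]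
  rw [hcompl, hcompl, Set.ncard_compl, Set.ncard_compl, hU]

end Counting

section Poset

variable {Ω : Type*} [PartialOrder Ω] {A B : Set Ω} {u v : Ω} {r : ℕ}

theorem subset_idl (B : Set Ω) : B ⊆ idl B := fun b hb => ⟨b, hb, le_rfl⟩

theorem idl_mono (h : A ⊆ B) : idl A ⊆ idl B := fun _ ⟨b, hb, hab⟩ => ⟨b, h hb, hab⟩

@[simp]
theorem idl_empty : idl (∅ : Set Ω) = ∅ := by
  simp [idl]

@[simp]
theorem idl_singleton (u : Ω) : idl {u} = Set.Iic u := by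
  ext a
  simp [idl]

/-- The order is the ordinal sum of the elements of length less than `r` and the elements of length
at least `r`; it is hierarchical when this holds for every `r`. -/
def SplitsAt (Ω : Type*) [PartialOrder Ω] (r : ℕ) : Prop :=
  ∀ u v : Ω, lenP u < r → r ≤ lenP v → u ≤ v

theorem hierarchical_iff_forall_splitsAt : Hierarchical Ω ↔ ∀ r, SplitsAt Ω r :=
  ⟨fun h _ u v hu hv => h u v (hu.trans_le hv), fun h u v huv => h _ u v (Nat.lt_succ_self _) huv⟩

theorem Hierarchical.splitsAt (h : Hierarchical Ω) (r : ℕ) : SplitsAt Ω r :=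
  hierarchical_iff_forall_splitsAt.1 h r

variable [Finite Ω]

theorem ncard_idl_lt_ncard_idl_insert (hu : u ∉ B) (h : (idl B).ncard ≤ (Set.Iic u).ncard) :
    (idl B).ncard < (idl (insert u B)).ncard := by
  have huB : u ∉ idl B := by
    rintro ⟨b, hb, hub⟩
    have hlt : u < b := hub.lt_of_ne (ne_of_mem_of_not_mem hb hu).symm
    refine h.not_gt (Set.ncard_lt_ncard ⟨fun a ha => ⟨b, hb, le_trans ha hub⟩, fun hsub => ?_⟩)
    exact hlt.not_ge (hsub (subset_idl B hb))
  refine Set.ncard_lt_ncard ⟨idl_mono (Set.subset_insert u B), fun hsub => huB ?_⟩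
  exact hsub (subset_idl _ (Set.mem_insert u B))

theorem card_le_lenP {c : Finset Ω} (hc : IsChain (· ≤ ·) (c : Set Ω)) (hu : u ∈ c)
    (hcu : ∀ x ∈ c, x ≤ u) : c.card ≤ lenP u := by
  have := Fintype.ofFinite Ω
  refine le_csSup ⟨Fintype.card Ω, ?_⟩ ⟨c, hc, hu, hcu, rfl⟩
  rintro _ ⟨c, -, -, -, rfl⟩
  exact c.card_le_univ

theorem exists_isChain_card_eq_lenP (u : Ω) :
    ∃ c : Finset Ω, IsChain (· ≤ ·) (c : Set Ω) ∧ u ∈ c ∧ (∀ x ∈ c, x ≤ u) ∧ c.card = lenP u := by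
  have := Fintype.ofFinite Ω
  refine Nat.sSup_mem (s := {n | ∃ c : Finset Ω, IsChain (· ≤ ·) (c : Set Ω) ∧ u ∈ c ∧
    (∀ x ∈ c, x ≤ u) ∧ c.card = n}) ⟨1, {u}, by simp⟩ ⟨Fintype.card Ω, ?_⟩
  rintro _ ⟨c, -, -, -, rfl⟩
  exact c.card_le_univ

theorem lenP_pos (u : Ω) : 0 < lenP u :=
  card_le_lenP (c := {u}) (by simp) (by simp) (by simp)

theorem lenP_le_maxChainCard (u : Ω) : lenP u ≤ maxChainCard Ω := by
  have := Fintype.ofFinite Ω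
  obtain ⟨c, hc, -, -, hcard⟩ := exists_isChain_card_eq_lenP u
  refine le_csSup ⟨Fintype.card Ω, ?_⟩ ⟨c, hc, hcard⟩
  rintro _ ⟨c, -, rfl⟩
  exact c.card_le_univ

theorem lenP_strictMono : StrictMono (lenP : Ω → ℕ) := by
  classical
  intro u v huv
  obtain ⟨c, hc, -, hcu, hcard⟩ := exists_isChain_card_eq_lenP u
  have hv : v ∉ c := fun hv => huv.not_ge (hcu v hv)
  have hcv : ∀ x ∈ c, x ≤ v := fun x hx => (hcu x hx).trans huv.le
  rw [← hcard, Nat.lt_iff_add_one_le, ← Finset.card_insert_of_notMem hv]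
  refine card_le_lenP ?_ (Finset.mem_insert_self v c) (by simpa using hcv)
  rw [Finset.coe_insert]
  exact hc.insert fun b hb _ => Or.inr (hcv b hb)

theorem exists_lt_lenP_add_one_eq (h : 1 < lenP v) : ∃ u < v, lenP u + 1 = lenP v := by
  classical
  obtain ⟨c, hc, hv, hcv, hcard⟩ := exists_isChain_card_eq_lenP v
  have hne : (c.erase v).Nonempty := by
    rw [← Finset.card_pos, Finset.card_erase_of_mem hv]
    lia
  obtain ⟨u, hu, hmax⟩ := (c.erase v).exists_maximal hne
  have huc : u ∈ c := Finset.mem_of_mem_erase hu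
  have huv : u < v := (hcv u huc).lt_of_ne (Finset.ne_of_mem_erase hu)
  refine ⟨u, huv, le_antisymm (lenP_strictMono huv) ?_⟩
  rw [← hcard, ← Finset.card_erase_add_one hv, Nat.add_le_add_iff_right]
  refine card_le_lenP (hc.mono (by simp)) hu fun x hx => ?_
  exact (hc.total (Finset.mem_of_mem_erase hx) huc).elim id (hmax hx)

theorem exists_le_lenP_eq (hr : 0 < r) (h : r ≤ lenP v) : ∃ u ≤ v, lenP u = r := by
  induction v using WellFoundedLT.induction with
  | ind v ih =>
    rcases h.eq_or_lt with h | h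
    · exact ⟨v, le_rfl, h.symm⟩
    · obtain ⟨w, hwv, hw⟩ := exists_lt_lenP_add_one_eq (lt_of_le_of_lt hr h)
      obtain ⟨u, huw, hu⟩ := ih w hwv (by lia)
      exact ⟨u, huw.trans hwv.le, hu⟩

namespace SplitsAt

theorem ncard_idl (h : SplitsAt Ω r) (hB : B ⊆ {a | lenP a ≤ r}) (hne : (B ∩ Wset r).Nonempty) :
    (idl B).ncard = {a : Ω | lenP a < r}.ncard + (B ∩ Wset r).ncard := by
  have hdisj : Disjoint {a : Ω | lenP a < r} (B ∩ Wset r) :=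
    Set.disjoint_left.2 fun a ha har => ha.ne har.2
  rw [← Set.ncard_union_eq hdisj]
  congr 1
  ext a
  constructor
  · rintro ⟨b, hb, hab⟩
    rcases hab.eq_or_lt with rfl | hab
    · have har : lenP a ≤ r := hB hb
      exact har.lt_or_eq.imp_right fun har => ⟨hb, har⟩
    · exact Or.inl ((lenP_strictMono hab).trans_le (hB hb))
  · rintro (ha | ha)
    · obtain ⟨b, hb, hbr⟩ := hne
      exact ⟨b, hb, h a b ha (Eq.ge hbr)⟩
    · exact subset_idl B ha.1

theorem ncard_idl_of_subset_Wset (h : SplitsAt Ω r) (hB : B ⊆ Wset r) (hne : B.Nonempty) :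
    (idl B).ncard = {a : Ω | lenP a < r}.ncard + B.ncard := by
  have hBr : B ∩ Wset r = B := Set.inter_eq_left.2 hB
  rw [h.ncard_idl (hB.trans fun a ha => le_of_eq ha) (hBr.symm ▸ hne), hBr]

theorem ncard_inter_Wset (h : SplitsAt Ω r) (hB : B ⊆ {a | lenP a ≤ r}) :
    (B ∩ Wset r).ncard = (idl B).ncard - {a : Ω | lenP a < r}.ncard := by
  rcases (B ∩ Wset r).eq_empty_or_nonempty with hemp | hne
  · have hlt : idl B ⊆ {a | lenP a < r} := by
      rintro a ⟨b, hb, hab⟩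
      have hbr : lenP b ≠ r := fun hbr => hemp.subset ⟨hb, hbr⟩
      exact (lenP_strictMono.monotone hab).trans_lt (lt_of_le_of_ne (hB hb) hbr)
    rw [hemp, Set.ncard_empty, Nat.sub_eq_zero_of_le (Set.ncard_le_ncard hlt)]
  · rw [h.ncard_idl hB hne, Nat.add_sub_cancel_left]

theorem subset_of_ncard_idl_le (h : SplitsAt Ω r) (hr : 0 < r)
    (hB : (idl B).ncard ≤ {a : Ω | lenP a < r}.ncard + 1) : B ⊆ {a | lenP a ≤ r} := by
  intro b hb
  by_contra hbr
  have hbr : r < lenP b := not_le.1 hbr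
  obtain ⟨w, hwb, hw⟩ := exists_le_lenP_eq hr hbr.le
  have hlt : (idl {w}).ncard < (idl B).ncard := by
    rw [idl_singleton]
    refine Set.ncard_lt_ncard ⟨fun a ha => ⟨b, hb, le_trans ha hwb⟩, fun hsub => hbr.ne' ?_⟩
    rw [← hw, le_antisymm hwb (hsub (subset_idl B hb))]
  rw [h.ncard_idl_of_subset_Wset (Set.singleton_subset_iff.2 hw) (Set.singleton_nonempty w),
    Set.ncard_singleton] at hlt
  exact hlt.not_ge hB

theorem exists_ncard_idl_eq_ncard_Iic (h : SplitsAt Ω r) (hr : ¬SplitsAt Ω (r + 1)) :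
    ∃ v : Ω, r < lenP v ∧ ∃ B : Set Ω, B.Nonempty ∧ B ⊆ Wset r ∧
      (idl B).ncard = (Set.Iic v).ncard := by
  obtain ⟨u, w, hur, hwr, huw⟩ : ∃ u w : Ω, lenP u < r + 1 ∧ r + 1 ≤ lenP w ∧ ¬u ≤ w := by
    simpa [SplitsAt] using hr
  obtain ⟨v, ⟨hv, huv⟩, hmin⟩ :=
    (Set.toFinite {v | r < lenP v ∧ ¬u ≤ v}).exists_minimal ⟨w, hwr, huw⟩
  have hu : lenP u = r := (Nat.lt_succ_iff.1 hur).eq_of_not_lt fun hu => huv (h u v hu hv.le)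
  have hIio : Set.Iio v = {a | lenP a < r} ∪ Wset r ∩ Set.Iio v := by
    ext a
    refine ⟨fun hav => ?_, ?_⟩
    · have har : lenP a ≤ r := not_lt.1 fun har =>
        (Set.mem_Iio.1 hav).not_ge (hmin ⟨har, fun hua => huv (hua.trans hav.le)⟩ hav.le)
      exact har.lt_or_eq.imp_right fun har => ⟨har, hav⟩
    · rintro (har | ⟨-, hav⟩)
      · have har : lenP a < r := har
        exact (h a v har hv.le).lt_of_ne fun hav => (hav ▸ har).not_ge hv.le
      · exact hav
  have hdisj : Disjoint {a : Ω | lenP a < r} (Wset r ∩ Set.Iio v) :=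
    Set.disjoint_left.2 fun a ha har => ha.ne har.1
  have hB : insert u (Wset r ∩ Set.Iio v) ⊆ Wset r :=
    Set.insert_subset hu Set.inter_subset_left
  have hcard : (Set.Iio v).ncard = _ := (congrArg Set.ncard hIio).trans (Set.ncard_union_eq hdisj)
  refine ⟨v, hv, _, Set.insert_nonempty u _, hB, ?_⟩
  rw [h.ncard_idl_of_subset_Wset hB (Set.insert_nonempty u _),
    Set.ncard_insert_of_notMem fun hu => huv hu.2.le, ← Set.Iio_insert,
    Set.ncard_insert_of_notMem Set.self_notMem_Iio, hcard, add_assoc]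

end SplitsAt

namespace Hierarchical

theorem ncard_Iic (h : Hierarchical Ω) (u : Ω) :
    (Set.Iic u).ncard = {a : Ω | lenP a < lenP u}.ncard + 1 := by
  rw [← idl_singleton, (h.splitsAt _).ncard_idl_of_subset_Wset (Set.singleton_subset_iff.2 rfl)
    (Set.singleton_nonempty u), Set.ncard_singleton]

theorem ncard_idl_le_iff (h : Hierarchical Ω) :
    (idl B).ncard ≤ {a : Ω | lenP a ≤ r}.ncard ↔ B ⊆ {a | lenP a ≤ r} := by
  refine ⟨fun hB b hb => ?_, fun hB => Set.ncard_le_ncard ?_⟩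
  · by_contra hbr
    have hbr : r < lenP b := not_le.1 hbr
    refine hB.not_gt (Set.ncard_lt_ncard ⟨fun a ha => ⟨b, hb, h a b (lt_of_le_of_lt ha hbr)⟩, ?_⟩)
    exact fun hsub => hbr.not_ge (hsub (subset_idl B hb))
  · rintro a ⟨b, hb, hab⟩
    exact (lenP_strictMono.monotone hab).trans (hB hb)

theorem ncard_inter_Wset_eq (h : Hierarchical Ω) (hAB : (idl A).ncard = (idl B).ncard)
    (hA : A ⊆ {a | lenP a ≤ r}) : (A ∩ Wset r).ncard = (B ∩ Wset r).ncard := by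
  have hB : B ⊆ {a | lenP a ≤ r} := h.ncard_idl_le_iff.1 (hAB ▸ h.ncard_idl_le_iff.2 hA)
  rw [(h.splitsAt r).ncard_inter_Wset hA, (h.splitsAt r).ncard_inter_Wset hB, hAB]

theorem Wset_subset_iff_of_ncard_idl_eq (h : Hierarchical Ω) (hAB : (idl A).ncard = (idl B).ncard)
    (hA : A ⊆ {a | lenP a ≤ r}) : Wset r ⊆ A ↔ Wset r ⊆ B := by
  have hcard := h.ncard_inter_Wset_eq hAB hA
  have hiff (C : Set Ω) : Wset r ⊆ C ↔ (C ∩ Wset r).ncard = (Wset (Ω := Ω) r).ncard := by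
    refine ⟨fun hC => by rw [Set.inter_eq_right.2 hC], fun hC => Set.inter_eq_right.1 ?_⟩
    exact Set.eq_of_subset_of_ncard_le Set.inter_subset_right hC.ge
  rw [hiff, hiff, hcard]

theorem ncard_idl_eq_of_perm (h : Hierarchical Ω) {σ : Equiv.Perm Ω}
    (hσ : ∀ i, lenP (σ i) = lenP i) (hAB : ∀ i, A ⊆ {a | lenP a ≤ lenP i} → (σ i ∈ B ↔ i ∈ A)) :
    (idl B).ncard = (idl A).ncard := by
  rcases A.eq_empty_or_nonempty with rfl | hne
  · have : B = ∅ := Set.eq_empty_iff_forall_notMem.2 fun b hb => by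
      simpa [hb] using hAB (σ.symm b)
    rw [this]
  obtain ⟨t, htA, hmax⟩ := A.toFinite.exists_maximalFor lenP A hne
  have hA : A ⊆ {a | lenP a ≤ lenP t} := fun a ha => (le_total _ _).elim id (hmax ha)
  have hAB' (i : Ω) (hi : lenP t ≤ lenP i) : σ i ∈ B ↔ i ∈ A :=
    hAB i (hA.trans fun a ha => ha.trans hi)
  have hB : B ⊆ {a | lenP a ≤ lenP t} := by
    intro b hb
    obtain ⟨i, rfl⟩ := σ.surjective b
    by_contra hit
    have hti : lenP t < lenP i := hσ i ▸ not_le.1 hit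
    exact hti.not_ge (hA ((hAB' i hti.le).1 hb))
  have himage : B ∩ Wset (lenP t) = σ '' (A ∩ Wset (lenP t)) := by
    ext b
    obtain ⟨i, rfl⟩ := σ.surjective b
    simp only [Wset, σ.injective.mem_set_image, Set.mem_inter_iff, Set.mem_ofPred_eq, hσ]
    exact and_congr_left fun hi => hAB' i hi.ge
  have hneA : (A ∩ Wset (lenP t)).Nonempty := ⟨t, htA, rfl⟩
  rw [(h.splitsAt _).ncard_idl hA hneA, (h.splitsAt _).ncard_idl hB (himage ▸ hneA.image σ), himage,
    Set.ncard_image_of_injective _ σ.injective]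

end Hierarchical

end Poset

section Support

variable {Ω : Type*} {H : Ω → Type*} [∀ i, Zero (H i)]

@[simp]
theorem hsupp_zero : hsupp (0 : ∀ i, H i) = ∅ := by
  simp [hsupp]

theorem hsupp_single [DecidableEq Ω] {i : Ω} {a : H i} (ha : a ≠ 0) :
    hsupp (Pi.single i a : ∀ i, H i) = {i} := by
  ext j
  rcases eq_or_ne j i with rfl | hj
  · simpa [hsupp]
  · simp [hsupp, hj]

theorem hsupp_update_zero [DecidableEq Ω] (x : ∀ i, H i) (i : Ω) :
    hsupp (Function.update x i 0) = hsupp x \ {i} := by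
  ext j
  rcases eq_or_ne j i with rfl | hj
  · simp [hsupp]
  · simp [hsupp, hj]

theorem hsupp_update [DecidableEq Ω] (x : ∀ i, H i) {i : Ω} {a : H i} (ha : a ≠ 0) :
    hsupp (Function.update x i a) = insert i (hsupp x) := by
  ext j
  rcases eq_or_ne j i with rfl | hj
  · simp [hsupp, ha]
  · simp [hsupp, hj]

theorem exists_hsupp_eq [∀ i, Nontrivial (H i)] (B : Set Ω) : ∃ x : ∀ i, H i, hsupp x = B := by
  classical
  choose a ha using fun i => exists_ne (0 : H i)
  refine ⟨fun i => if i ∈ B then a i else 0, ?_⟩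
  ext i
  by_cases hi : i ∈ B <;> simp [hsupp, hi, ha]

variable [PartialOrder Ω]

@[simp]
theorem wtP_zero : wtP (0 : ∀ i, H i) = 0 := by
  simp [wtP]

theorem wtP_single [DecidableEq Ω] {i : Ω} {a : H i} (ha : a ≠ 0) :
    wtP (Pi.single i a : ∀ i, H i) = (Set.Iic i).ncard := by
  rw [wtP, hsupp_single ha, idl_singleton]

theorem wtP_eq_zero [Finite Ω] {x : ∀ i, H i} : wtP x = 0 ↔ x = 0 := by
  refine ⟨fun h => ?_, fun h => h ▸ wtP_zero⟩
  have hx : hsupp x = ∅ := Set.subset_empty_iff.1 <|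
    (subset_idl _).trans_eq ((Set.ncard_eq_zero).1 h)
  funext i
  by_contra hi
  exact hx.subset hi

end Support

section SupportedOn

variable {Ω K : Type*} {H : Ω → Type*} [∀ i, AddCommGroup (H i)]

theorem hsupp_smul [DivisionRing K] [∀ i, Module K (H i)] {c : K}
    (hc : c ≠ 0) (x : ∀ i, H i) : hsupp (c • x) = hsupp x := by
  ext i
  simp [hsupp, hc]

theorem hsupp_add_of_disjoint {x y : ∀ i, H i} (hxy : Disjoint (hsupp x) (hsupp y)) :
    hsupp (x + y) = hsupp x ∪ hsupp y := by
  ext i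
  have hi : x i = 0 ∨ y i = 0 := by
    by_contra! hi
    exact Set.disjoint_left.1 hxy hi.1 hi.2
  rcases hi with hi | hi <;> simp [hsupp, hi]

variable [Ring K] [∀ i, Module K (H i)]

variable (K H) in
/-- The vectors supported on `s`. With `s` the elements of length at most, or less than, `r`, these
are the steps of the filtration of the ambient space by levels. -/
def supportedOn (s : Set Ω) : Submodule K (∀ i, H i) := Submodule.pi sᶜ fun _ => ⊥

theorem mem_supportedOn {s : Set Ω} {x : ∀ i, H i} : x ∈ supportedOn K H s ↔ hsupp x ⊆ s := by
  simp only [supportedOn, Submodule.mem_pi, Submodule.mem_bot, Set.mem_compl_iff]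
  exact forall_congr' fun i => not_imp_comm

theorem supportedOn_mono : Monotone (supportedOn K H) := fun _ _ hst _ hx =>
  mem_supportedOn.2 ((mem_supportedOn.1 hx).trans hst)

end SupportedOn

section Sufficiency

variable {Ω K : Type*} [Finite Ω] [PartialOrder Ω] [DivisionRing K] {H : Ω → Type*}
  [∀ i, AddCommGroup (H i)] [∀ i, Module K (H i)] [∀ i, FiniteDimensional K (H i)]

namespace CondE

theorem exists_perm_Wset (hE : CondE K H) {V : Type*} [AddCommGroup V] [Module K V]
    [Module.Finite K V] {μ l : V →ₗ[K] ∀ i, H i} (hw : ∀ x, wtP (l x) = wtP (μ x)) {r : ℕ}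
    (hμ : ∀ x, hsupp (μ x) ⊆ {a | lenP a ≤ r})
    (hr : (∀ i : Ω, lenP i = r → Module.finrank K (H i) = 1) ∨
      ((Wset (Ω := Ω) r).ncard : ℕ∞) ≤ ENat.card K) :
    ∃ σ : Equiv.Perm (Wset (Ω := Ω) r), ∃ g : ∀ i : Wset (Ω := Ω) r, H i ≃ₗ[K] H (σ i),
      ∀ i x, l x (σ i) = g i (μ x i) := by
  have hcount (x : V) : {i : Wset (Ω := Ω) r | μ x i ≠ 0}.ncard =
      {i : Wset (Ω := Ω) r | l x i ≠ 0}.ncard :=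
    calc {i : Wset (Ω := Ω) r | μ x i ≠ 0}.ncard = (hsupp (μ x) ∩ Wset r).ncard :=
          Set.ncard_subtype (fun i => lenP i = r) (hsupp (μ x))
      _ = (hsupp (l x) ∩ Wset r).ncard := hE.1.ncard_inter_Wset_eq (hw x).symm (hμ x)
      _ = {i : Wset (Ω := Ω) r | l x i ≠ 0}.ncard :=
          (Set.ncard_subtype (fun i => lenP i = r) (hsupp (l x))).symm
  obtain ⟨σ, hσ⟩ := exists_perm_ker_eq (A := fun i : Wset (Ω := Ω) r => H i)
    (l := fun i => LinearMap.proj i.1 ∘ₗ μ) (m := fun i => LinearMap.proj i.1 ∘ₗ l)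
    (hr.imp_left fun hr i => hr i i.2) hcount
  choose g hg using fun i : Wset (Ω := Ω) r => exists_linearEquiv_apply_eq_of_ker_eq
    (hE.2 i (σ i) (i.2.trans (σ i).2.symm)).some (hσ i)
  exact ⟨σ, g, fun i x => (hg i x).symm⟩

theorem exists_perm (hE : CondE K H)
    (hr : ∀ r, (∀ i : Ω, lenP i = r → Module.finrank K (H i) = 1) ∨
      ((Wset (Ω := Ω) r).ncard : ℕ∞) ≤ ENat.card K)
    {C : Submodule K (∀ i, H i)} {f : C →ₗ[K] ∀ i, H i} (hf : ∀ x : C, wtP (f x) = wtP x.1) :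
    ∃ σ : Equiv.Perm Ω, (∀ i, lenP (σ i) = lenP i) ∧ ∃ g : ∀ i, H i ≃ₗ[K] H (σ i),
      ∀ (i : Ω) (x : C), hsupp x.1 ⊆ {a | lenP a ≤ lenP i} → f x (σ i) = g i (x.1 i) := by
  have key (r : ℕ) := hE.exists_perm_Wset (V := ↥(C ⊓ supportedOn K H {a | lenP a ≤ r}))
    (μ := Submodule.subtype _) (l := f ∘ₗ Submodule.inclusion inf_le_left)
    (fun x => hf (Submodule.inclusion inf_le_left x)) (fun x => mem_supportedOn.1 x.2.2) (hr r)
  choose σ g hg using key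
  exact ⟨Equiv.ofFiberEquiv (f := lenP) (g := lenP) σ, Equiv.ofFiberEquiv_map (f := lenP) σ,
    fun i => g (lenP i) ⟨i, rfl⟩,
    fun i x hx => hg (lenP i) ⟨i, rfl⟩ ⟨x, x.2, mem_supportedOn.2 hx⟩⟩

theorem mepp (hE : CondE K H)
    (hr : ∀ r, (∀ i : Ω, lenP i = r → Module.finrank K (H i) = 1) ∨
      ((Wset (Ω := Ω) r).ncard : ℕ∞) ≤ ENat.card K) : MEPP K H := by
  intro C f hf
  obtain ⟨σ, hσ, g, hg⟩ := hE.exists_perm hr hf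
  let G : (∀ i, H i) →ₗ[K] ∀ i, H i :=
    (LinearEquiv.piCongrRight g ≪≫ₗ LinearEquiv.piCongrLeft K H σ).toLinearMap
  have hG (x : ∀ i, H i) (i : Ω) : G x (σ i) = g i (x i) :=
    Equiv.piCongrLeft_apply_apply H σ _ i
  have hdiff (s : ℕ) (x : C) (hx : x.1 ∈ supportedOn K H {a | lenP a ≤ s}) :
      (f - G ∘ₗ C.subtype) x ∈ supportedOn K H {a | lenP a < s} := by
    refine mem_supportedOn.2 fun j hj => ?_
    obtain ⟨i, rfl⟩ := σ.surjective j
    by_contra hi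
    have hsi : s ≤ lenP i := hσ i ▸ not_lt.1 hi
    have hxi : hsupp x.1 ⊆ {a | lenP a ≤ lenP i} :=
      (mem_supportedOn.1 hx).trans fun a ha => le_trans ha hsi
    exact hj (sub_eq_zero.2 ((hg i x hxi).trans (hG x i).symm))
  obtain ⟨N, hNC, hN⟩ := exists_extend_of_filtration
    (F := fun s => supportedOn K H {a | lenP a ≤ s})
    (fun s t hst => supportedOn_mono fun a ha => le_trans ha hst)
    (fun s => supportedOn K H {a | lenP a < s}) _ (maxChainCard Ω + 1) fun s _ => hdiff s
  have hwt (x : ∀ i, H i) : wtP ((G + N) x) = wtP x := by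
    refine hE.1.ncard_idl_eq_of_perm hσ fun i hi => ?_
    have hNi : N x (σ i) = 0 := by
      by_contra hne
      have hlt := mem_supportedOn.1 (hN (lenP i) (Nat.lt_succ_of_le (lenP_le_maxChainCard i)) x
        (mem_supportedOn.2 hi)) hne
      exact hlt.ne (hσ i)
    change (G + N) x (σ i) ≠ 0 ↔ x i ≠ 0
    rw [LinearMap.add_apply, Pi.add_apply, hNi, add_zero, hG, Ne, LinearEquiv.map_eq_zero_iff]
  have hinj : Function.Injective (G + N) := (injective_iff_map_eq_zero _).2 fun x hx =>
    wtP_eq_zero.1 (by rw [← hwt, hx, wtP_zero])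
  refine ⟨LinearEquiv.ofInjectiveEndo _ hinj, hwt, fun x => ?_⟩
  change G x + N x = f x
  rw [hNC]
  exact add_sub_cancel _ _

end CondE

end Sufficiency

section Extension

variable {Ω K : Type*} [PartialOrder Ω] [Ring K] {H : Ω → Type*} [∀ i, AddCommGroup (H i)]
  [∀ i, Module K (H i)]

namespace MEPP

theorem exists_extension {V : Type*} [AddCommGroup V] [Module K V] (h : MEPP K H)
    {μ l : V →ₗ[K] ∀ i, H i} (hμ : Function.Injective μ) (hw : ∀ x, wtP (l x) = wtP (μ x)) :
    ∃ φ : (∀ i, H i) ≃ₗ[K] ∀ i, H i, (∀ x, wtP (φ x) = wtP x) ∧ ∀ x, φ (μ x) = l x := by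
  let e : V ≃ₗ[K] μ.range := LinearEquiv.ofInjective μ hμ
  obtain ⟨φ, hφ, hext⟩ := h μ.range (l ∘ₗ e.symm.toLinearMap) <| e.surjective.forall.2 fun x => by
    simpa [e] using hw x
  exact ⟨φ, hφ, fun x => by simpa [e] using hext (e x)⟩

theorem surjective_of_injective [Finite Ω] (h : MEPP K H) {u v : Ω} [Nontrivial (H u)]
    (huv : (Set.Iic u).ncard = (Set.Iic v).ncard) {j : H u →ₗ[K] H v}
    (hj : Function.Injective j) : Function.Surjective j := by
  classical
  obtain ⟨φ, hφ, hφj⟩ := h.exists_extension (μ := LinearMap.single K H v ∘ₗ j)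
    (l := LinearMap.single K H u) ((Pi.single_injective v).comp hj) fun x => by
      rcases eq_or_ne x 0 with rfl | hx
      · simp
      · have hjx : j x ≠ 0 := (map_ne_zero_iff j hj).2 hx
        simp [wtP_single hx, wtP_single hjx, huv]
  by_contra! hsurj
  obtain ⟨b, hb⟩ : ∃ b, ∀ x, j x ≠ b := by simpa [Function.Surjective] using hsurj
  -- Moving `b` along the range of `j` changes coordinate `u` of `z` at will, at constant weight.
  let z := φ (Pi.single v b)
  have hwt (a : H u) : wtP (Function.update z u a) = (Set.Iic u).ncard := by
    have hz : Function.update z u a = φ (Pi.single v (b - j (z u - a))) := by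
      rw [Pi.single_sub, map_sub]
      have := hφj (z u - a)
      simp only [LinearMap.comp_apply, LinearMap.coe_single] at this
      rw [this]
      ext i
      rcases eq_or_ne i u with rfl | hi
      · simp [z]
      · simp [z, hi]
    rw [hz, hφ, wtP_single (sub_ne_zero.2 (hb _).symm), huv]
  obtain ⟨a, ha⟩ := exists_ne (0 : H u)
  have hzero := hwt 0
  have hne := hwt a
  rw [wtP, hsupp_update_zero] at hzero
  rw [wtP, hsupp_update z ha, ← Set.insert_sdiff_singleton] at hne
  have := ncard_idl_lt_ncard_idl_insert (u := u) (B := hsupp z \ {u}) (by simp) hzero.le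
  exact this.ne (hzero.trans hne.symm)

end MEPP

theorem SplitsAt.map_mem_supportedOn [Finite Ω] {r : ℕ} (h : SplitsAt Ω r) (hr : 0 < r)
    {φ : (∀ i, H i) →ₗ[K] ∀ i, H i} (hφ : ∀ x, wtP (φ x) = wtP x) {x : ∀ i, H i}
    (hx : x ∈ supportedOn K H {a | lenP a ≤ r}) : φ x ∈ supportedOn K H {a | lenP a ≤ r} := by
  classical
  have := Fintype.ofFinite Ω
  rw [← Finset.univ_sum_single x, map_sum]
  refine Submodule.sum_mem _ fun i _ => mem_supportedOn.2 (h.subset_of_ncard_idl_le hr ?_)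
  change wtP (φ (Pi.single i (x i))) ≤ _
  rw [hφ]
  by_cases hxi : x i = 0
  · simp [hxi]
  · have hi : Set.Iic i ⊆ insert i {a | lenP a < r} := by
      intro a ha
      refine (Set.mem_Iic.1 ha).eq_or_lt.imp_right fun ha => ?_
      exact (lenP_strictMono ha).trans_le (mem_supportedOn.1 hx hxi)
    rw [wtP_single hxi]
    exact (Set.ncard_le_ncard hi).trans (Set.ncard_insert_le _ _)

end Extension

section Necessity

variable {Ω K : Type*} [PartialOrder Ω] [DivisionRing K] {H : Ω → Type*}
  [∀ i, AddCommGroup (H i)] [∀ i, Module K (H i)]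

namespace MEPP

theorem exists_map_eq (h : MEPP K H) {y z : ∀ i, H i} (hy : y ≠ 0) (hw : wtP z = wtP y) :
    ∃ φ : (∀ i, H i) ≃ₗ[K] ∀ i, H i, (∀ x, wtP (φ x) = wtP x) ∧ φ y = z := by
  obtain ⟨φ, hφ, hext⟩ := h.exists_extension (μ := LinearMap.toSpanSingleton K _ y)
    (l := LinearMap.toSpanSingleton K _ z) (smul_left_injective K hy) fun c => by
      rcases eq_or_ne c 0 with rfl | hc
      · simp
      · simpa [wtP, hsupp_smul hc] using hw
  exact ⟨φ, hφ, by simpa using hext 1⟩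

variable [Finite Ω] [∀ i, Nontrivial (H i)]

theorem splitsAt_succ (h : MEPP K H) {r : ℕ} (hr : SplitsAt Ω r) : SplitsAt Ω (r + 1) := by
  classical
  by_contra hsplit
  obtain ⟨v, hv, B, hne, hB, hcard⟩ := hr.exists_ncard_idl_eq_ncard_Iic hsplit
  obtain ⟨y, rfl⟩ := exists_hsupp_eq (H := H) B
  obtain ⟨u, hu⟩ := hne
  have hpos : 0 < r := hB hu ▸ lenP_pos u
  have hy : y ≠ 0 := fun hy => hu (congrFun hy u)
  obtain ⟨a, ha⟩ := exists_ne (0 : H v)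
  obtain ⟨φ, hφ, hφy⟩ := h.exists_map_eq hy ((wtP_single ha).trans hcard.symm)
  have hφB := mem_supportedOn.1 <| hr.map_mem_supportedOn hpos (φ := φ.toLinearMap) hφ <|
    mem_supportedOn.2 (hB.trans fun i hi => le_of_eq hi)
  rw [LinearEquiv.coe_coe, hφy, hsupp_single ha] at hφB
  exact hv.not_ge (hφB rfl)

theorem hierarchical (h : MEPP K H) : Hierarchical Ω := by
  refine hierarchical_iff_forall_splitsAt.2 fun r => ?_
  induction r with
  | zero => exact fun _ _ hu => absurd hu (Nat.not_lt_zero _)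
  | succ r ih => exact h.splitsAt_succ ih

theorem nonempty_linearEquiv (h : MEPP K H) {u v : Ω}
    (huv : (Set.Iic u).ncard = (Set.Iic v).ncard) : Nonempty (H u ≃ₗ[K] H v) := by
  rcases le_total (Cardinal.lift (Module.rank K (H u))) (Cardinal.lift (Module.rank K (H v)))
    with hrank | hrank
  · obtain ⟨j, hj⟩ := lift_rank_le_iff_exists_linearMap.1 hrank
    exact ⟨LinearEquiv.ofBijective j ⟨hj, h.surjective_of_injective huv hj⟩⟩
  · obtain ⟨j, hj⟩ := lift_rank_le_iff_exists_linearMap.1 hrank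
    exact ⟨(LinearEquiv.ofBijective j ⟨hj, h.surjective_of_injective huv.symm hj⟩).symm⟩

theorem condE (h : MEPP K H) : CondE K H := by
  refine ⟨h.hierarchical, fun u v huv => h.nonempty_linearEquiv ?_⟩
  rw [h.hierarchical.ncard_Iic, h.hierarchical.ncard_Iic, huv]

theorem exists_forall_apply_ne_zero (h : MEPP K H) {r : ℕ} {T : Set Ω} (hT : T ⊆ Wset r)
    (hne : T.Nonempty) {V : Type*} [AddCommGroup V] [Module K V] {μ l : V →ₗ[K] ∀ i, H i}
    (hμ : ∀ x, x ≠ 0 → hsupp (μ x) = T) (hl : ∀ x, hsupp (l x) ⊆ Wset r)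
    (hcard : ∀ x, x ≠ 0 → (hsupp (l x)).ncard = T.ncard) :
    ∃ i, ∀ x, x ≠ 0 → l x i ≠ 0 := by
  have hP := h.hierarchical
  have hinj : Function.Injective μ := (injective_iff_map_eq_zero μ).2 fun x hx => by
    by_contra hx0
    exact hne.ne_empty (by rw [← hμ x hx0, hx, hsupp_zero])
  have hw (x : V) : wtP (l x) = wtP (μ x) := by
    rcases eq_or_ne x 0 with rfl | hx
    · simp
    have hnel : (hsupp (l x)).Nonempty :=
      (Set.ncard_pos (Set.toFinite _)).1 (hcard x hx ▸ (Set.ncard_pos (Set.toFinite _)).2 hne)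
    rw [wtP, wtP, hμ x hx, (hP.splitsAt r).ncard_idl_of_subset_Wset hT hne,
      (hP.splitsAt r).ncard_idl_of_subset_Wset (hl x) hnel, hcard x hx]
  obtain ⟨φ, hφ, hφμ⟩ := h.exists_extension hinj hw
  -- Adding `e` completes every `μ x`, `x ≠ 0`, to support `Wset r`, so `φ e` is nonzero wherever
  -- some such `l x` is zero; but `φ e` cannot be nonzero on all of `Wset r`.
  obtain ⟨e, he⟩ := exists_hsupp_eq (H := H) (Wset r \ T)
  have hle : Wset r ⊆ {a : Ω | lenP a ≤ r} := fun a ha => le_of_eq ha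
  have hfull (x : V) (hx : x ≠ 0) : Wset r ⊆ hsupp (l x + φ e) := by
    have hsupp_eq : hsupp (μ x + e) = Wset r := by
      rw [hsupp_add_of_disjoint (by rw [hμ x hx, he]; exact Set.disjoint_sdiff_right), hμ x hx, he,
        Set.union_sdiff_cancel hT]
    rw [← hφμ, ← map_add, ← hP.Wset_subset_iff_of_ncard_idl_eq (hφ _).symm (hsupp_eq ▸ hle),
      hsupp_eq]
  by_contra! hzero
  have hφe : Wset r ⊆ hsupp (φ e) := fun i hi => by
    obtain ⟨x, hx, hxi⟩ := hzero i
    simpa [hsupp, hxi] using hfull x hx hi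
  rw [← hP.Wset_subset_iff_of_ncard_idl_eq (hφ e).symm (he ▸ Set.sdiff_subset.trans hle), he] at hφe
  obtain ⟨i, hi⟩ := hne
  exact (hφe (hT hi)).2 hi

end MEPP

end Necessity

section Pencil

variable {K : Type*} [DivisionRing K]

/-- The pencil of linear forms on `K²`, indexed by the points of the projective line with `none` the
point at infinity. Each nonzero vector is a zero of exactly one member of the pencil. -/
def pencil : Option K → (Fin 2 → K) →ₗ[K] K
  | none => LinearMap.proj 1
  | some t => LinearMap.proj 0 - (LinearMap.proj 1 : (Fin 2 → K) →ₗ[K] K).smulRight t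

theorem exists_forall_pencil_eq_zero_iff {x : Fin 2 → K} (hx : x ≠ 0) :
    ∃ o, ∀ o', pencil o' x = 0 ↔ o' = o := by
  by_cases hx1 : x 1 = 0
  · have hx0 : x 0 ≠ 0 := fun hx0 => hx (by ext i; fin_cases i <;> simpa)
    exact ⟨none, fun o' => by cases o' <;> simp [pencil, hx1, hx0]⟩
  · refine ⟨some ((x 1)⁻¹ * x 0), fun o' => ?_⟩
    cases o' with
    | none => simp [pencil, hx1]
    | some t =>
      rw [Option.some_inj, eq_inv_mul_iff_mul_eq₀ hx1]
      exact sub_eq_zero.trans eq_comm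

theorem ncard_pencil_ne_zero [Finite K] {x : Fin 2 → K} (hx : x ≠ 0) :
    {o | pencil o x ≠ 0}.ncard = Nat.card K := by
  obtain ⟨o, ho⟩ := exists_forall_pencil_eq_zero_iff hx
  have hcompl : {o' | pencil o' x ≠ 0} = {o}ᶜ := by
    ext o'
    simp [ho]
  rw [hcompl, Set.ncard_compl, Set.ncard_singleton, Finite.card_option, Nat.add_sub_cancel]

theorem exists_ne_zero_pencil_eq_zero (o : Option K) : ∃ x, x ≠ 0 ∧ pencil o x = 0 := by
  have hker : (pencil o).ker ≠ ⊥ := LinearMap.ker_ne_bot_of_finrank_lt (by simp)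
  obtain ⟨x, hx, hx0⟩ := Submodule.exists_mem_ne_zero_of_ne_bot hker
  exact ⟨x, hx0, hx⟩

end Pencil

section Embedding

variable {Ω K V : Type*} {H : Ω → Type*} [AddCommGroup V] [∀ i, AddCommGroup (H i)]

theorem exists_linearMap_forall_hsupp_eq [Ring K] [Module K V] [∀ i, Module K (H i)] {T : Set Ω}
    (hT : ∀ i ∈ T, ∃ a : V →ₗ[K] H i, Function.Injective a) :
    ∃ μ : V →ₗ[K] ∀ i, H i, ∀ x, x ≠ 0 → hsupp (μ x) = T := by
  classical
  choose a ha using hT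
  refine ⟨LinearMap.pi fun i => if hi : i ∈ T then a i hi else 0, fun x hx => ?_⟩
  ext i
  by_cases hi : i ∈ T
  · simpa [hsupp, hi] using (map_ne_zero_iff _ (ha i hi)).2 hx
  · simp [hsupp, hi]

theorem exists_linearMap_forall_hsupp_eq_image [DivisionRing K] [Module K V]
    [∀ i, Module K (H i)] [∀ i, Nontrivial (H i)] {ι : Type*} {g : ι → Ω}
    (hg : Function.Injective g) (p : ι → V →ₗ[K] K) :
    ∃ l : V →ₗ[K] ∀ i, H i, ∀ x, hsupp (l x) = g '' {o | p o x ≠ 0} := by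
  choose b hb using fun i => exists_ne (0 : H i)
  refine ⟨LinearMap.pi fun i => LinearMap.toSpanSingleton K _ (b i) ∘ₗ Function.extend g p 0 i,
    fun x => ?_⟩
  ext i
  by_cases hi : ∃ o, g o = i
  · obtain ⟨o, rfl⟩ := hi
    simp [hsupp, hg.extend_apply, hg.mem_set_image, hb]
  · have hi' : i ∉ g '' {o | p o x ≠ 0} := fun ⟨o, _, ho⟩ => hi ⟨o, ho⟩
    simp [hsupp, Function.extend_apply' _ _ _ hi, hi']

end Embedding

section Main

variable {Ω K : Type*} [Finite Ω] [PartialOrder Ω] [DivisionRing K] {H : Ω → Type*}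
  [∀ i, AddCommGroup (H i)] [∀ i, Module K (H i)] [∀ i, Nontrivial (H i)]

theorem MEPP.ncard_Wset_le (h : MEPP K H) {r : ℕ}
    (hr : ∀ i : Ω, lenP i = r → 1 < Module.finrank K (H i)) :
    ((Wset (Ω := Ω) r).ncard : ℕ∞) ≤ ENat.card K := by
  by_contra! hlt
  have : Finite K := by
    by_contra hK
    simp [ENat.card_eq_top.2 (not_finite_iff_infinite.1 hK)] at hlt
  obtain ⟨g, hg, hgr⟩ : ∃ g : Option K → Ω, Function.Injective g ∧ ∀ o, lenP (g o) = r := by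
    have := Fintype.ofFinite K
    have := Fintype.ofFinite (Wset (Ω := Ω) r)
    rw [ENat.card_eq_coe_fintype_card, Nat.cast_lt, ← Nat.card_coe_set_eq,
      Nat.card_eq_fintype_card] at hlt
    obtain ⟨g⟩ := Function.Embedding.nonempty_of_card_le (Fintype.card_option.trans_le hlt)
    exact ⟨fun o => g o, Subtype.val_injective.comp g.injective, fun o => (g o).2⟩
  have hemb (i : Ω) (hi : lenP i = r) : ∃ a : (Fin 2 → K) →ₗ[K] H i, Function.Injective a := by
    obtain ⟨v, hv⟩ := exists_linearIndependent_of_le_finrank (hr i hi)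
    exact ⟨Fintype.linearCombination K v,
      linearIndependent_iff_injective_fintypeLinearCombination.1 hv⟩
  have hT : g '' {none}ᶜ ⊆ Wset r := Set.image_subset_iff.2 fun o _ => hgr o
  obtain ⟨μ, hμ⟩ := exists_linearMap_forall_hsupp_eq fun i hi => hemb i (hT hi)
  obtain ⟨l, hl⟩ := exists_linearMap_forall_hsupp_eq_image (H := H) hg pencil
  have hlr (x : Fin 2 → K) : hsupp (l x) ⊆ Wset r :=
    hl x ▸ Set.image_subset_iff.2 fun o _ => hgr o
  have hcard (x : Fin 2 → K) (hx : x ≠ 0) : (hsupp (l x)).ncard = (g '' {none}ᶜ).ncard := by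
    rw [hl, Set.ncard_image_of_injective _ hg, Set.ncard_image_of_injective _ hg,
      ncard_pencil_ne_zero hx, Set.ncard_compl, Set.ncard_singleton, Finite.card_option,
      Nat.add_sub_cancel]
  obtain ⟨i, hi⟩ :=
    h.exists_forall_apply_ne_zero hT ⟨g (some 0), some 0, by simp, rfl⟩ hμ hlr hcard
  have hmem (x : Fin 2 → K) (hx : x ≠ 0) : ∃ o, pencil o x ≠ 0 ∧ g o = i := (hl x).subset (hi x hx)
  obtain ⟨o, -, rfl⟩ := hmem (Pi.single 0 1) (by simp)
  obtain ⟨x, hx, hox⟩ := exists_ne_zero_pencil_eq_zero o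
  obtain ⟨o', ho', heq⟩ := hmem x hx
  exact ho' (hg heq ▸ hox)

end Main

theorem stmt19_general {Ω : Type*} [Finite Ω] [PartialOrder Ω] (𝔽 : Type*) [DivisionRing 𝔽]
    (H : Ω → Type*) [∀ i, AddCommGroup (H i)] [∀ i, Module 𝔽 (H i)]
    [∀ i, FiniteDimensional 𝔽 (H i)] [∀ i, Nontrivial (H i)] :
    MEPP 𝔽 H ↔ CondE 𝔽 H ∧ ∀ r ∈ Finset.Icc 1 (maxChainCard Ω),
      (∀ i : Ω, lenP i = r → Module.finrank 𝔽 (H i) = 1) ∨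
        ((Wset (Ω := Ω) r).ncard : ℕ∞) ≤ ENat.card 𝔽 := by
  refine ⟨fun h => ⟨h.condE, fun r _ => ?_⟩, fun ⟨hE, hr⟩ => hE.mepp fun r => ?_⟩
  · refine or_iff_not_imp_left.2 fun hdim => h.ncard_Wset_le fun i hi => ?_
    push Not at hdim
    obtain ⟨j, hj, hdimj⟩ := hdim
    have hij := (h.condE.2 i j (hi.trans hj.symm)).some.finrank_eq
    have hpos : 0 < Module.finrank 𝔽 (H i) := Module.finrank_pos
    lia
  · by_cases hlevel : ∃ i : Ω, lenP i = r
    · obtain ⟨i, rfl⟩ := hlevel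
      exact hr _ (Finset.mem_Icc.2 ⟨lenP_pos i, lenP_le_maxChainCard i⟩)
    · exact Or.inl fun i hi => absurd ⟨i, hi⟩ hlevel

theorem stmt19 {Ω : Type*} [Fintype Ω] [Nonempty Ω] [PartialOrder Ω]
    (𝔽 : Type*) [Field 𝔽] [Fintype 𝔽]
    (k : Ω → ℕ) (hk : ∀ i : Ω, 0 < k i) :
    MEPP 𝔽 (fun i : Ω => Fin (k i) → 𝔽) ↔
      (CondE 𝔽 (fun i : Ω => Fin (k i) → 𝔽) ∧
        ∀ r ∈ Finset.Icc 1 (maxChainCard Ω),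
          (∀ i : Ω, lenP i = r → k i = 1) ∨
            Set.ncard (Wset (Ω := Ω) r) ≤ Fintype.card 𝔽) := by
  have (i : Ω) : Nonempty (Fin (k i)) := ⟨⟨0, hk i⟩⟩
  simpa only [Module.finrank_fin_fun, ENat.card_eq_coe_fintype_card, Nat.cast_le] using
    stmt19_general 𝔽 fun i => Fin (k i) → 𝔽
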